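/- In the group setting above, the map φ: A ×_B C → D defined by φ(a,c) = α(a·r(f(a))⁻¹)·γ(c) is a group homomorphism, assuming α(ker f) and γ(ker g) commute elementwise in D. -/

import Mathlib

/-!
Let `k a = a * (r (f a))⁻¹` be the component of `a` in `ker f`, so that `φ (a, c) = α (k a) * γ c`.
The map `k` is a crossed homomorphism: `k (a * a') = k a * (r (f a) * k a' * (r (f a))⁻¹)`.
If `f a = g c`, then `γ c` and `α (r (f a)) = γ (s (f a))` differ by an element of `γ (ker g)`,
which commutes with `α (k a')`, so both conjugate `α (k a')` in the same way. Hence `γ c` can be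
moved past `α (k a')` and the twist is absorbed.
-/

section KerPart

variable {A B : Type*} [Group A] [Group B] (f : A →* B) (r : B →* A)

/-- The `ker f`-component of `a` in the decomposition `A = ker f ⋊ r(B)` of an extension split by
the section `r` of `f`; `φ` applies `α` to it. It takes values in `A` rather than in
`f.ker`, so that the definition does not need `r` to be a section. -/
def kerPart (a : A) : A :=
  a * (r (f a))⁻¹

theorem map_kerPart {f : A →* B} {r : B →* A} (hfr : Function.LeftInverse f r) (a : A) :
    f (kerPart f r a) = 1 := by
  rw [kerPart, map_mul, map_inv, hfr, mul_inv_cancel]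

theorem kerPart_mul (a a' : A) :
    kerPart f r (a * a') = kerPart f r a * (r (f a) * kerPart f r a' * (r (f a))⁻¹) := by
  simp only [kerPart, map_mul]
  group

end KerPart

theorem semiconjBy_map_conj_of_commute_ker {A B C D : Type*} [Group A] [Group B] [Group C]
    [Monoid D] {g : C →* B} {α : A →* D} {γ : C →* D} {a x : A} {c c' : C}
    (hg : g c' = g c) (ha : α a = γ c') (hx : ∀ y, g y = 1 → Commute (α x) (γ y)) :
    SemiconjBy (γ c) (α x) (α (a * x * a⁻¹)) := by
  have hker : g (c'⁻¹ * c) = 1 := by rw [map_mul, map_inv, hg, inv_mul_cancel]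
  have hc : γ c = α a * γ (c'⁻¹ * c) := by rw [ha, ← map_mul, mul_inv_cancel_left]
  rw [hc]
  exact ((SemiconjBy.conj_mk a x).map α).mul_left (hx _ hker).symm

theorem stmt1_general {A B C D : Type*} [Group A] [Group B] [Group C] [Monoid D]
    (f : A →* B) (g : C →* B) (r : B →* A) (s : B → C)
    (hfr : ∀ b, f (r b) = b) (hgs : ∀ b, g (s b) = b)
    (α : A →* D) (γ : C →* D) (hβ : ∀ b, α (r b) = γ (s b))
    (hcomm : ∀ x y, f x = 1 → g y = 1 → Commute (α x) (γ y))
    (p q : A × C) (hp : f p.1 = g p.2) :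
    α ((p * q).1 * (r (f (p * q).1))⁻¹) * γ (p * q).2 =
      α (p.1 * (r (f p.1))⁻¹) * γ p.2 * (α (q.1 * (r (f q.1))⁻¹) * γ q.2) := by
  obtain ⟨a, c⟩ := p
  obtain ⟨a', c'⟩ := q
  let k := kerPart f r
  have hconj : γ c * α (k a') = α (r (f a) * k a' * (r (f a))⁻¹) * γ c :=
    semiconjBy_map_conj_of_commute_ker ((hgs _).trans hp) (hβ _)
      fun y hy => hcomm _ y (map_kerPart hfr a') hy
  calc α (k (a * a')) * γ (c * c')
      = α (k a) * (α (r (f a) * k a' * (r (f a))⁻¹) * γ c) * γ c' := by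
        simp only [k, kerPart_mul, map_mul, mul_assoc]
    _ = α (k a) * (γ c * α (k a')) * γ c' := by rw [hconj]
    _ = α (k a) * γ c * (α (k a') * γ c') := by simp only [mul_assoc]

theorem stmt1 {A B C D : Type*} [Group A] [Group B] [Group C] [Group D]
    (f : A →* B) (g : C →* B) (r : B →* A) (s : B →* C)
    (hfr : ∀ b, f (r b) = b) (hgs : ∀ b, g (s b) = b)
    (α : A →* D) (γ : C →* D) (hβ : ∀ b, α (r b) = γ (s b))
    (hcomm : ∀ x y, f x = 1 → g y = 1 → Commute (α x) (γ y)) :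
    ∀ p q : A × C, f p.1 = g p.2 → f q.1 = g q.2 →
      (fun p : A × C => α (p.1 * (r (f p.1))⁻¹) * γ p.2) (p * q) =
      (fun p : A × C => α (p.1 * (r (f p.1))⁻¹) * γ p.2) p *
      (fun p : A × C => α (p.1 * (r (f p.1))⁻¹) * γ p.2) q :=
  fun p q hp _ => stmt1_general f g r s hfr hgs α γ hβ hcomm p q hp
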